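/- Let m₁ > 0 and m₄ > 0 be real numbers, and let S = {k·m₁ + l·m₄ : k, l ∈ ℕ} ⊆ ℝ be the threshold set. Let Δ ⊆ ℝ and set β = dist(Δ, S) = inf{|x − s| : x ∈ Δ, s ∈ S}. Let n ∈ ℕ, let μ : Fin n → ℝ be masses with μⱼ ∈ {0, m₁, m₄} for every j, and let p : Fin n → ℝ³ be momenta. If the total free energy Σⱼ √(‖pⱼ‖² + μⱼ²) belongs to Δ, then Σⱼ ‖pⱼ‖² / √(‖pⱼ‖² + μⱼ²) ≥ β (with the convention that a term with pⱼ = 0 and μⱼ = 0 equals 0). -/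

import Mathlib

/-!
For `ω = √(‖p‖² + m²)` one has `‖p‖² / ω = ω - m² / ω ≥ ω - |m|`, as `|m| ≤ ω`. Summing over the
particles, the commutator symbol dominates the excess of the total energy over the total rest
energy. The total rest energy is itself a threshold, so this excess is the distance from a point
of `Δ` to a point of `S`.
-/

open scoped BigOperators

section Dispersion

variable {E : Type*} [Norm E]

/-- The relativistic dispersion relation `ω_m(p) = √(‖p‖² + m²)`: the energy of a particle of mass
`m` and momentum `p`. Allowing `m` of either sign makes the rest energy `|m|`. -/
noncomputable def dispersion (m : ℝ) (p : E) : ℝ :=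
  √(‖p‖ ^ 2 + m ^ 2)

theorem abs_le_dispersion (m : ℝ) (p : E) : |m| ≤ dispersion m p :=
  Real.abs_le_sqrt (le_add_of_nonneg_left (sq_nonneg ‖p‖))

theorem dispersion_sq (m : ℝ) (p : E) : dispersion m p ^ 2 = ‖p‖ ^ 2 + m ^ 2 :=
  Real.sq_sqrt (by positivity)

theorem norm_sq_div_dispersion (m : ℝ) (p : E) :
    ‖p‖ ^ 2 / dispersion m p = dispersion m p - m ^ 2 / dispersion m p := by
  rw [eq_sub_of_add_eq (dispersion_sq m p).symm, sub_div, sq (dispersion m p),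
    mul_self_div_self]

theorem dispersion_sub_abs_le (m : ℝ) (p : E) :
    dispersion m p - |m| ≤ ‖p‖ ^ 2 / dispersion m p := by
  have h : m ^ 2 / dispersion m p ≤ |m| := by
    refine div_le_of_le_mul₀ (Real.sqrt_nonneg _) (abs_nonneg m) ?_
    rw [← sq_abs, sq]
    exact mul_le_mul_of_nonneg_left (abs_le_dispersion m p) (abs_nonneg m)
  rw [norm_sq_div_dispersion]
  exact sub_le_sub_left h _

theorem dist_sum_dispersion_sum_abs_le {ι : Type*} (t : Finset ι) (μ : ι → ℝ) (p : ι → E) :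
    dist (∑ j ∈ t, dispersion (μ j) (p j)) (∑ j ∈ t, |μ j|) ≤
      ∑ j ∈ t, ‖p j‖ ^ 2 / dispersion (μ j) (p j) := by
  have h : ∑ j ∈ t, |μ j| ≤ ∑ j ∈ t, dispersion (μ j) (p j) :=
    Finset.sum_le_sum fun j _ => abs_le_dispersion (μ j) (p j)
  rw [Real.dist_eq, abs_of_nonneg (sub_nonneg.2 h), ← Finset.sum_sub_distrib]
  exact Finset.sum_le_sum fun j _ => dispersion_sub_abs_le (μ j) (p j)

end Dispersion

/-- The distance between two sets, `dist(A, B) = inf {dist x y | x ∈ A, y ∈ B}`; it takes the junk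
value `0` when `A` or `B` is empty. -/
noncomputable def setDist {α : Type*} [Dist α] (A B : Set α) : ℝ :=
  sInf {r : ℝ | ∃ x ∈ A, ∃ y ∈ B, r = dist x y}

theorem setDist_le_dist {α : Type*} [PseudoMetricSpace α] {A B : Set α} {x y : α} (hx : x ∈ A)
    (hy : y ∈ B) : setDist A B ≤ dist x y :=
  csInf_le ⟨0, by rintro _ ⟨x, _, y, _, rfl⟩; exact dist_nonneg⟩ ⟨x, hx, y, hy, rfl⟩

theorem coe_addSubmonoid_closure_pair {R : Type*} [NonAssocSemiring R] (a b : R) :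
    (AddSubmonoid.closure {a, b} : Set R) = {x | ∃ k l : ℕ, x = k * a + l * b} := by
  ext x
  simp only [SetLike.mem_coe, AddSubmonoid.mem_closure_pair, nsmul_eq_mul, Set.mem_ofPred_eq,
    eq_comm]

theorem mourre_symbol_lower_bound_general {E ι : Type*} [Norm E] (S : AddSubmonoid ℝ)
    (Δ : Set ℝ) (t : Finset ι) (μ : ι → ℝ) (hμ : ∀ j ∈ t, |μ j| ∈ S) (p : ι → E)
    (hE : ∑ j ∈ t, dispersion (μ j) (p j) ∈ Δ) :
    setDist Δ S ≤ ∑ j ∈ t, ‖p j‖ ^ 2 / dispersion (μ j) (p j) :=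
  (setDist_le_dist hE (sum_mem hμ)).trans (dist_sum_dispersion_sum_abs_le t μ p)

/-- Pointwise (symbol-level) content of Proposition 5.1 of the paper: if the total free
energy of a configuration of particles of masses `μ j ∈ {0, m₁, m₄}` lies in a set `Δ` at
distance `β` from the threshold set `S = {k m₁ + l m₄}`, then the Mourre commutator symbol
`∑ ‖p j‖² / √(‖p j‖² + μ j²)` is at least `β`. -/
theorem mourre_symbol_lower_bound
    (m₁ m₄ : ℝ) (hm₁ : 0 < m₁) (hm₄ : 0 < m₄)
    (S : Set ℝ) (hS : S = {x : ℝ | ∃ k l : ℕ, x = k * m₁ + l * m₄})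
    (Δ : Set ℝ) (β : ℝ)
    (hβ : β = sInf {r : ℝ | ∃ x ∈ Δ, ∃ s ∈ S, r = |x - s|})
    (n : ℕ) (μ : Fin n → ℝ) (hμ : ∀ j, μ j = 0 ∨ μ j = m₁ ∨ μ j = m₄)
    (p : Fin n → EuclideanSpace ℝ (Fin 3))
    (hE : (∑ j, Real.sqrt (‖p j‖ ^ 2 + (μ j) ^ 2)) ∈ Δ) :
    β ≤ ∑ j, ‖p j‖ ^ 2 / Real.sqrt (‖p j‖ ^ 2 + (μ j) ^ 2) := by
  rw [hβ, hS, ← coe_addSubmonoid_closure_pair]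
  refine mourre_symbol_lower_bound_general _ Δ Finset.univ μ (fun j _ => ?_) p hE
  rcases hμ j with h | h | h
  · rw [h, abs_zero]
    exact zero_mem _
  · rw [h, abs_of_pos hm₁]
    exact AddSubmonoid.subset_closure (Set.mem_insert _ _)
  · rw [h, abs_of_pos hm₄]
    exact AddSubmonoid.subset_closure (Set.mem_insert_of_mem _ rfl)
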